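/- arXiv:2404.04847 — 2 statements merged into one kernel-verified Lean document; each statement's English description precedes it below -/
import Mathlib

section
/- Let γ=(F,W,A,r) be a capacity-balanced many-to-one assignment market and μ an optimal matching. Then (x,y)∈ℝ^F×ℝ^W belongs to the core C(v_γ) of the associated game if and only if: (i) 0 ≤ y_j ≤ a_{j^μ j} for all j∈W; (ii) y_k − y_j ≥ a_{j^μ k} − a_{j^μ j} for all j,k∈W with j^μ ≠ k^μ; and (iii) x_i = Σ_{j∈μ(i)} (a_{ij} − y_j) for all i∈F. -/
/-!
The core constraints reduce to `0 ≤ y j` and to the statement that no firm `i` can gain more than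
`x i` by hiring at most `r i` workers at the wages `y`. Budget balance forces the latter to hold
with equality at the workforce assigned by `m`, so for `0 ≤ y` the core allocations are those in
which every firm receives its net gain and its workforce, which fills its capacity, maximizes that
gain. A set `B` maximizes a sum among all sets of at most `B.card` elements iff dropping one
element or swapping one element never helps: dropping yields `y j ≤ A (m j) j`, swapping yields the
inequalities between workers of different firms.
-/

open Finset
open scoped Classical

noncomputable section

variable {F W : Type*} [Fintype F] [Fintype W]

/-- `μ` is a matching between the firm coalition `S` and the worker coalition `T`:
each firm `i ∈ S` appears in at most `r i` pairs and each worker in `T` in at most one pair. -/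
def IsMatching (r : F → ℕ) (S : Finset F) (T : Finset W) (μ : Finset (F × W)) : Prop :=
  (∀ p ∈ μ, p.1 ∈ S ∧ p.2 ∈ T) ∧
  (∀ i : F, (μ.filter fun p => p.1 = i).card ≤ r i) ∧
  (∀ j : W, (μ.filter fun p => p.2 = j).card ≤ 1)

/-- total value of a matching -/
def matchValue (A : F → W → ℝ) (μ : Finset (F × W)) : ℝ := ∑ p ∈ μ, A p.1 p.2

lemma empty_isMatching (r : F → ℕ) (S : Finset F) (T : Finset W) :
    IsMatching r S T (∅ : Finset (F × W)) := by
  refine ⟨by simp, ?_, ?_⟩ <;> intro _ <;> simp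

/-- worth of the coalition formed by firms `S` and workers `T`. -/
def vGamma (A : F → W → ℝ) (r : F → ℕ) (S : Finset F) (T : Finset W) : ℝ :=
  ((S ×ˢ T).powerset.filter fun μ => IsMatching r S T μ).sup'
    ⟨∅, Finset.mem_filter.mpr ⟨Finset.mem_powerset.mpr (Finset.empty_subset _),
        empty_isMatching r S T⟩⟩ (matchValue A)

/-- firms belonging to a coalition of `F ⊕ W` -/
def firmPart (C : Finset (F ⊕ W)) : Finset F := univ.filter (fun i => Sum.inl i ∈ C)

/-- workers belonging to a coalition of `F ⊕ W` -/
def workerPart (C : Finset (F ⊕ W)) : Finset W := univ.filter (fun j => Sum.inr j ∈ C)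

/-- the coalitional function of the many-to-one assignment game -/
def gameValue (A : F → W → ℝ) (r : F → ℕ) (C : Finset (F ⊕ W)) : ℝ :=
  vGamma A r (firmPart C) (workerPart C)

/-- core membership -/
def inCore {N : Type*} [Fintype N] (v : Finset N → ℝ) (z : N → ℝ) : Prop :=
  (∑ k, z k) = v univ ∧ ∀ C : Finset N, v C ≤ ∑ k ∈ C, z k

/-- optimal matching of the grand coalition -/
def IsOptimalMatching (A : F → W → ℝ) (r : F → ℕ) (μ : Finset (F × W)) : Prop :=
  IsMatching r univ univ μ ∧
  ∀ μ' : Finset (F × W), IsMatching r univ univ μ' → matchValue A μ' ≤ matchValue A μ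

/-- workers assigned to firm `i` under the assignment function `m` -/
def assignedTo (m : W → F) (i : F) : Finset W := univ.filter fun j => m j = i

/-- the matching associated with an assignment function (every worker matched) -/
def matchingOfFn (m : W → F) : Finset (F × W) := univ.image fun j => (m j, j)

/-- `m : W → F` represents an optimal matching of a capacity-balanced market that assigns
exactly `r i` workers to each firm `i` and leaves no worker unmatched. -/
def IsBalancedOptimal (A : F → W → ℝ) (r : F → ℕ) (m : W → F) : Prop :=
  (∀ i : F, (assignedTo m i).card = r i) ∧
  IsOptimalMatching A r (matchingOfFn m)

/-- the projection of the core to the workers' payoffs -/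
def CW (A : F → W → ℝ) (m : W → F) : Set (W → ℝ) :=
  { y | (∀ j : W, 0 ≤ y j ∧ y j ≤ A (m j) j) ∧
        ∀ j k : W, m j ≠ m k → A (m j) k - A (m j) j ≤ y k - y j }

/-- excess of a coalition at a payoff vector -/
def excess {N : Type*} (v : Finset N → ℝ) (z : N → ℝ) (S : Finset N) : ℝ :=
  v S - ∑ k ∈ S, z k

/-- maximum surplus `s_ij(z)` of `i` against `j` at `z` -/
def maxSurplus {N : Type*} (v : Finset N → ℝ) (z : N → ℝ) (i j : N) : ℝ :=
  sSup { e | ∃ S : Finset N, i ∈ S ∧ j ∉ S ∧ e = excess v z S }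

def isImputation {N : Type*} [Fintype N] (v : Finset N → ℝ) (z : N → ℝ) : Prop :=
  (∑ k, z k) = v univ ∧ ∀ k : N, v {k} ≤ z k

def inKernel {N : Type*} [Fintype N] (v : Finset N → ℝ) (z : N → ℝ) : Prop :=
  isImputation v z ∧ ∀ i j : N, i ≠ j → maxSurplus v z i j = maxSurplus v z j i

/-- A coalition is inessential if it admits a nontrivial partition into two coalitions
whose values weakly majorize its own value. -/
def Inessential {N : Type*} (v : Finset N → ℝ) (R : Finset N) : Prop :=
  ∃ S T : Finset N, S.Nonempty ∧ T.Nonempty ∧ Disjoint S T ∧ S ∪ T = R ∧ v R ≤ v S + v T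

def Essential {N : Type*} (v : Finset N → ℝ) (R : Finset N) : Prop :=
  R.Nonempty ∧ ¬ Inessential v R

/-- arcs of the tight digraph on `W ∪ {0}` (node `0` is `none`) -/
def tightArc (A : F → W → ℝ) (m : W → F) (y : W → ℝ) : Option W → Option W → Prop
  | none, none => False
  | none, some k => y k = 0
  | some j, none => y j = A (m j) j
  | some j, some k => m j ≠ m k ∧ y k - y j = A (m j) k - A (m j) j

section SetOptimization

variable {ι M : Type*} [AddCommMonoid M] [PartialOrder M] [IsOrderedCancelAddMonoid M]
  {f : ι → M} {s t : Finset ι}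

lemma sum_le_sum_of_card_le_of_forall_sdiff_le [DecidableEq ι] (hcard : s.card ≤ t.card)
    (hnonneg : ∀ j ∈ t \ s, 0 ≤ f j) (hle : ∀ j ∈ t \ s, ∀ k ∈ s \ t, f k ≤ f j) :
    ∑ k ∈ s, f k ≤ ∑ j ∈ t, f j := by
  rw [← sum_sdiff_le_sum_sdiff]
  obtain ⟨e⟩ : Nonempty (↥(s \ t) ↪ ↥(t \ s)) :=
    Function.Embedding.nonempty_of_card_le (by simpa using card_sdiff_le_card_sdiff_iff.mpr hcard)
  calc ∑ k ∈ s \ t, f k = ∑ k : ↥(s \ t), f k := (sum_coe_sort _ _).symm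
    _ ≤ ∑ k : ↥(s \ t), f (e k) := sum_le_sum fun k _ => hle _ (e k).2 _ k.2
    _ = ∑ j ∈ univ.map e, f j := (sum_map univ e fun j => f j).symm
    _ ≤ ∑ j : ↥(t \ s), f j := sum_le_sum_of_subset_of_nonneg (subset_univ _) fun j _ _ =>
        hnonneg _ j.2
    _ = ∑ j ∈ t \ s, f j := sum_coe_sort _ _

lemma forall_card_le_sum_le_iff :
    (∀ s : Finset ι, s.card ≤ t.card → ∑ k ∈ s, f k ≤ ∑ j ∈ t, f j) ↔
      (∀ j ∈ t, 0 ≤ f j) ∧ ∀ j ∈ t, ∀ k ∉ t, f k ≤ f j := by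
  refine ⟨fun hmax => ⟨fun j hj => ?_, fun j hj k hk => ?_⟩,
    fun ⟨hnonneg, hle⟩ s hcard => sum_le_sum_of_card_le_of_forall_sdiff_le hcard
      (fun j hj => hnonneg j (mem_sdiff.mp hj).1)
      fun j hj k hk => hle j (mem_sdiff.mp hj).1 k (mem_sdiff.mp hk).2⟩
  · have hdrop := hmax (t.erase j) card_erase_le
    rwa [← add_sum_erase t f hj, le_add_iff_nonneg_left] at hdrop
  · have hk' : k ∉ t.erase j := fun h => hk (mem_of_mem_erase h)
    have hswap := hmax (insert k (t.erase j))
      (by rw [card_insert_of_notMem hk', card_erase_add_one hj])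
    rwa [sum_insert hk', ← add_sum_erase t f hj, add_le_add_iff_right] at hswap

end SetOptimization

section Matching

omit [Fintype F] [Fintype W]

variable {r : F → ℕ} {S : Finset F} {T : Finset W} {μ : Finset (F × W)}

/-- The set `μ(i)` of workers matched to firm `i` by `μ`. -/
def matchedWorkers (μ : Finset (F × W)) (i : F) : Finset W :=
  (μ.filter fun p => p.1 = i).image Prod.snd

lemma mem_matchedWorkers {i : F} {j : W} : j ∈ matchedWorkers μ i ↔ (i, j) ∈ μ := by
  simp [matchedWorkers]

namespace IsMatching

lemma card_matchedWorkers_le (hμ : IsMatching r S T μ) (i : F) :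
    (matchedWorkers μ i).card ≤ r i :=
  card_image_le.trans (hμ.2.1 i)

lemma injOn_snd (hμ : IsMatching r S T μ) : Set.InjOn Prod.snd (μ : Set (F × W)) :=
  fun p hp q hq hpq => card_le_one.mp (hμ.2.2 q.2) p (mem_filter.mpr ⟨hp, hpq⟩) q
    (mem_filter.mpr ⟨hq, rfl⟩)

lemma sum_eq_sum_matchedWorkers {M : Type*} [AddCommMonoid M] (hμ : IsMatching r S T μ)
    (g : F → W → M) : ∑ p ∈ μ, g p.1 p.2 = ∑ i ∈ S, ∑ j ∈ matchedWorkers μ i, g i j :=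
  sum_finset_product' _ _ _ fun p =>
    ⟨fun hp => ⟨(hμ.1 p hp).1, mem_matchedWorkers.mpr hp⟩, fun hp => mem_matchedWorkers.mp hp.2⟩

lemma sum_snd_le {M : Type*} [AddCommMonoid M] [PartialOrder M] [IsOrderedAddMonoid M]
    (hμ : IsMatching r S T μ) {y : W → M} (hy : ∀ j ∈ T, 0 ≤ y j) :
    ∑ p ∈ μ, y p.2 ≤ ∑ j ∈ T, y j := by
  rw [← sum_image (f := y) hμ.injOn_snd]
  exact sum_le_sum_of_subset_of_nonneg (image_subset_iff.mpr fun p hp => (hμ.1 p hp).2)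
    fun j hj _ => hy j hj

lemma singleton_product {i : F} (hT : T.card ≤ r i) : IsMatching r {i} T ({i} ×ˢ T) := by
  refine ⟨fun p => mem_product.mp, fun i' => ?_, fun j => card_le_one.mpr ?_⟩
  · obtain rfl | hne := eq_or_ne i' i
    · exact (card_filter_le _ _).trans (by simpa using hT)
    · have hempty : ({i} ×ˢ T).filter (fun p => p.1 = i') = ∅ :=
        filter_eq_empty_iff.mpr fun p hp hi' =>
          hne (hi'.symm.trans (mem_singleton.mp (mem_product.mp hp).1))
      simp only [hempty, card_empty, Nat.zero_le]
  · rintro ⟨i₁, j₁⟩ h₁ ⟨i₂, j₂⟩ h₂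
    simp_all

end IsMatching

end Matching

section Worth

variable {A : F → W → ℝ} {r : F → ℕ} {S : Finset F} {T : Finset W} {μ : Finset (F × W)}

lemma vGamma_le_iff {c : ℝ} :
    vGamma A r S T ≤ c ↔ ∀ μ, IsMatching r S T μ → matchValue A μ ≤ c := by
  refine (sup'_le_iff _ _).trans ⟨fun h μ hμ => h μ ?_, fun h μ hμ => h μ (mem_filter.mp hμ).2⟩
  exact mem_filter.mpr ⟨mem_powerset.mpr fun p hp => mem_product.mpr (hμ.1 p hp), hμ⟩

lemma IsMatching.matchValue_le_vGamma (hμ : IsMatching r S T μ) :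
    matchValue A μ ≤ vGamma A r S T :=
  vGamma_le_iff.mp le_rfl μ hμ

lemma vGamma_nonneg : 0 ≤ vGamma A r S T := by
  simpa [matchValue] using (empty_isMatching r S T).matchValue_le_vGamma (A := A)

lemma sum_le_vGamma_singleton {i : F} (hT : T.card ≤ r i) :
    ∑ j ∈ T, A i j ≤ vGamma A r {i} T := by
  simpa [matchValue, sum_product] using
    (IsMatching.singleton_product hT).matchValue_le_vGamma (A := A)

lemma forall_vGamma_le_sum_add_sum_iff {x : F → ℝ} {y : W → ℝ} :
    (∀ S T, vGamma A r S T ≤ ∑ i ∈ S, x i + ∑ j ∈ T, y j) ↔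
      (∀ j, 0 ≤ y j) ∧ ∀ i (T : Finset W), T.card ≤ r i → ∑ j ∈ T, (A i j - y j) ≤ x i := by
  refine ⟨fun h => ⟨fun j => ?_, fun i T hT => ?_⟩, fun ⟨hy, hx⟩ S T => vGamma_le_iff.mpr ?_⟩
  · simpa using vGamma_nonneg.trans (h ∅ {j})
  · rw [sum_sub_distrib, sub_le_iff_le_add]
    simpa using (sum_le_vGamma_singleton hT).trans (h {i} T)
  · intro μ hμ
    calc matchValue A μ = ∑ p ∈ μ, (A p.1 p.2 - y p.2) + ∑ p ∈ μ, y p.2 := by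
          rw [← sum_add_distrib]; simp only [sub_add_cancel, matchValue]
      _ = ∑ i ∈ S, ∑ j ∈ matchedWorkers μ i, (A i j - y j) + ∑ p ∈ μ, y p.2 := by
          rw [hμ.sum_eq_sum_matchedWorkers fun i j => A i j - y j]
      _ ≤ ∑ i ∈ S, x i + ∑ j ∈ T, y j :=
          add_le_add (sum_le_sum fun i _ => hx i _ (hμ.card_matchedWorkers_le i))
            (hμ.sum_snd_le fun j _ => hy j)

end Worth

section Core

variable {A : F → W → ℝ} {r : F → ℕ} {m : W → F} {x : F → ℝ} {y : W → ℝ}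

lemma gameValue_disjSum (S : Finset F) (T : Finset W) :
    gameValue A r (S.disjSum T) = vGamma A r S T := by
  simp [gameValue, firmPart, workerPart]

lemma inCore_gameValue_iff :
    inCore (gameValue A r) (Sum.elim x y) ↔
      ∑ i, x i + ∑ j, y j = vGamma A r univ univ ∧
        ∀ S T, vGamma A r S T ≤ ∑ i ∈ S, x i + ∑ j ∈ T, y j := by
  have hcoalition (S : Finset F) (T : Finset W) :
      gameValue A r (S.disjSum T) ≤ ∑ k ∈ S.disjSum T, Sum.elim x y k ↔
        vGamma A r S T ≤ ∑ i ∈ S, x i + ∑ j ∈ T, y j := by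
    simp [gameValue_disjSum]
  refine and_congr ?_ ⟨fun h S T => (hcoalition S T).mp (h _), fun h C => ?_⟩
  · rw [← univ_disjSum_univ, gameValue_disjSum, sum_disjSum]
    rfl
  · rw [← toLeft_disjSum_toRight (u := C)]
    exact (hcoalition _ _).mpr (h _ _)

omit [Fintype F] in
lemma mem_assignedTo {i : F} {j : W} : j ∈ assignedTo m i ↔ m j = i := by
  simp [assignedTo]

omit [Fintype F] in
lemma forall_mem_assignedTo {p : F → W → Prop} :
    (∀ i, ∀ j ∈ assignedTo m i, p i j) ↔ ∀ j, p (m j) j :=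
  ⟨fun h j => h _ j (mem_assignedTo.mpr rfl), fun h _ j hj => mem_assignedTo.mp hj ▸ h j⟩

lemma matchValue_matchingOfFn (A : F → W → ℝ) (m : W → F) :
    matchValue A (matchingOfFn m) = ∑ i, ∑ j ∈ assignedTo m i, A i j :=
  sum_finset_product' _ _ _ fun p => by
    simp [matchingOfFn, mem_assignedTo, Prod.ext_iff]

lemma IsOptimalMatching.vGamma_univ {μ : Finset (F × W)} (hμ : IsOptimalMatching A r μ) :
    vGamma A r univ univ = matchValue A μ :=
  le_antisymm (vGamma_le_iff.mpr hμ.2) hμ.1.matchValue_le_vGamma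

lemma IsBalancedOptimal.budget_iff (hm : IsBalancedOptimal A r m) :
    ∑ i, x i + ∑ j, y j = vGamma A r univ univ ↔
      ∑ i, ∑ j ∈ assignedTo m i, (A i j - y j) = ∑ i, x i := by
  have hy : ∑ j, y j = ∑ i, ∑ j ∈ assignedTo m i, y j := (sum_fiberwise univ m y).symm
  simp only [hm.2.vGamma_univ, matchValue_matchingOfFn, hy, sum_sub_distrib]
  exact eq_sub_iff_add_eq.symm.trans eq_comm

lemma IsBalancedOptimal.inCore_iff_forall_card_le (hm : IsBalancedOptimal A r m) :
    inCore (gameValue A r) (Sum.elim x y) ↔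
      (∀ j, 0 ≤ y j) ∧ (∀ i, x i = ∑ j ∈ assignedTo m i, (A i j - y j)) ∧
        ∀ i (T : Finset W), T.card ≤ (assignedTo m i).card →
          ∑ j ∈ T, (A i j - y j) ≤ ∑ j ∈ assignedTo m i, (A i j - y j) := by
  simp only [inCore_gameValue_iff, forall_vGamma_le_sum_add_sum_iff, hm.budget_iff, hm.1]
  constructor
  · rintro ⟨hbudget, hy, hx⟩
    have hgain (i : F) : x i = ∑ j ∈ assignedTo m i, (A i j - y j) :=
      ((sum_eq_sum_iff_of_le fun i _ => hx i _ (hm.1 i).le).mp hbudget i (mem_univ i)).symm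
    exact ⟨hy, hgain, fun i T hT => (hx i T hT).trans_eq (hgain i)⟩
  · rintro ⟨hy, hgain, hmax⟩
    exact ⟨sum_congr rfl fun i _ => (hgain i).symm, hy,
      fun i T hT => (hmax i T hT).trans_eq (hgain i).symm⟩

end Core

theorem core_characterization_general (A : F → W → ℝ) (r : F → ℕ) (m : W → F)
    (hm : IsBalancedOptimal A r m) (x : F → ℝ) (y : W → ℝ) :
    inCore (gameValue A r) (Sum.elim x y) ↔
      ((∀ j : W, 0 ≤ y j ∧ y j ≤ A (m j) j) ∧
       (∀ j k : W, m j ≠ m k → A (m j) k - A (m j) j ≤ y k - y j) ∧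
       (∀ i : F, x i = ∑ j ∈ assignedTo m i, (A i j - y j))) := by
  have hswap (j k : W) :
      k ∉ assignedTo m (m j) → A (m j) k - y k ≤ A (m j) j - y j ↔
        m j ≠ m k → A (m j) k - A (m j) j ≤ y k - y j := by
    rw [mem_assignedTo, eq_comm, sub_le_sub_iff, sub_le_sub_iff, add_comm (y k)]
  simp only [hm.inCore_iff_forall_card_le, forall_card_le_sum_le_iff, forall_and,
    forall_mem_assignedTo, sub_nonneg, hswap]
  tauto

/-- description of the core of a capacity-balanced many-to-one
assignment market in terms of the workers' payoffs. -/
theorem core_characterization (A : F → W → ℝ) (r : F → ℕ)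
    (hA : ∀ i j, 0 ≤ A i j) (hbal : ∑ i, r i = Fintype.card W)
    (m : W → F) (hm : IsBalancedOptimal A r m) (x : F → ℝ) (y : W → ℝ) :
    inCore (gameValue A r) (Sum.elim x y) ↔
      ((∀ j : W, 0 ≤ y j ∧ y j ≤ A (m j) j) ∧
       (∀ j k : W, m j ≠ m k → A (m j) k - A (m j) j ≤ y k - y j) ∧
       (∀ i : F, x i = ∑ j ∈ assignedTo m i, (A i j - y j))) :=
  core_characterization_general A r m hm x y

end
end

section
/- Consider the many-to-one assignment market with firms F={f_1,f_2} of capacities r=(2,2), workers W={w_1,w_2,w_3}, and valuations a_{ij}=1 for all i∈F, j∈W. For the associated game v_γ: (1) the core consists of the single point (x_1,x_2;y_1,y_2,y_3)=(0,0;1,1,1); (2) the kernel equals the segment {(α,α; 1−2α/3, 1−2α/3, 1−2α/3) : 0 ≤ α ≤ 3/2}; consequently the kernel is not a subset of the core. -/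
open Finset
open scoped Classical

noncomputable section

variable {F W : Type*} [Fintype F] [Fintype W]

/-!
When every pair is worth `1`, a coalition with seat total `R` and `t` workers is worth `min R t`.

*Core.* If the seats outnumber the workers and two firms have seats, then for every worker `j` two
disjoint groups of firms can be fully supplied with workers so that all workers are used and only
`j` is used twice. Adding the two core inequalities yields a payoff of at least `1` for `j`; as the
whole market is worth one unit per worker, nothing is left for the firms.

*Kernel.* With equal capacities, firms are substitutes for each other, and so are workers, and the
kernel treats substitutes equally. This leaves the payoffs giving `α` to each firm and an equal
share of the rest to each worker. The only remaining equations compare a firm with a worker; if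
there are fewer vacant seats than one firm has, they hold automatically, because both maximum
surpluses are attained by all firms but one together with exactly as many workers as they can hire.
-/

section TransferableUtility

variable {N : Type*} {v : Finset N → ℝ} {z : N → ℝ} {i j : N}

lemma inCore.add_sub_le_sum_inter [Fintype N] [DecidableEq N] (h : inCore v z) {C D : Finset N}
    (hCD : C ∪ D = univ) : v C + v D - v univ ≤ ∑ k ∈ C ∩ D, z k := by
  have hsum := sum_union_inter (s₁ := C) (s₂ := D) (f := z)
  rw [hCD, h.1] at hsum
  linarith [h.2 C, h.2 D]

lemma maxSurplus_eq_excess {C : Finset N} (hi : i ∈ C) (hj : j ∉ C)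
    (hC : ∀ D, i ∈ D → j ∉ D → excess v z D ≤ excess v z C) : maxSurplus v z i j = excess v z C :=
  IsGreatest.csSup_eq ⟨⟨C, hi, hj, rfl⟩, by rintro _ ⟨D, hiD, hjD, rfl⟩; exact hC D hiD hjD⟩

lemma isGreatest_maxSurplus [Finite N] (hij : i ≠ j) :
    IsGreatest {e | ∃ S : Finset N, i ∈ S ∧ j ∉ S ∧ e = excess v z S} (maxSurplus v z i j) := by
  have hfin : {e | ∃ S : Finset N, i ∈ S ∧ j ∉ S ∧ e = excess v z S}.Finite :=
    (Set.finite_range (excess v z)).subset (by rintro _ ⟨S, -, -, rfl⟩; exact ⟨S, rfl⟩)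
  have hne : {e | ∃ S : Finset N, i ∈ S ∧ j ∉ S ∧ e = excess v z S}.Nonempty :=
    ⟨_, {i}, by simp, by simpa using hij.symm, rfl⟩
  exact ⟨hne.csSup_mem hfin, fun _ he => le_csSup hfin.bddAbove he⟩

/-- Players `i` and `j` are substitutes (or symmetric) in the game `v`: they contribute equally to
every coalition containing neither of them. -/
def AreSubstitutes [DecidableEq N] (v : Finset N → ℝ) (i j : N) : Prop :=
  ∀ C : Finset N, i ∉ C → j ∉ C → v (insert i C) = v (insert j C)

namespace AreSubstitutes

variable [DecidableEq N]

lemma symm (h : AreSubstitutes v i j) : AreSubstitutes v j i :=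
  fun C hj hi => (h C hi hj).symm

lemma maxSurplus_add_le [Finite N] (h : AreSubstitutes v i j) (hij : i ≠ j) :
    maxSurplus v z i j + z i ≤ maxSurplus v z j i + z j := by
  obtain ⟨C, hiC, hjC, hC⟩ := (isGreatest_maxSurplus (v := v) (z := z) hij).1
  have hj_erase : j ∉ C.erase i := fun hj => hjC (mem_of_mem_erase hj)
  have hle : excess v z (insert j (C.erase i)) ≤ maxSurplus v z j i :=
    (isGreatest_maxSurplus hij.symm).2 ⟨_, by simp, by simp [hij], rfl⟩
  have hv := h _ (notMem_erase i C) hj_erase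
  rw [insert_erase hiC] at hv
  rw [excess, ← hv, sum_insert hj_erase] at hle
  rw [hC, excess, ← add_sum_erase C z hiC]
  linarith

lemma maxSurplus_eq_iff [Finite N] (h : AreSubstitutes v i j) (hij : i ≠ j) :
    maxSurplus v z i j = maxSurplus v z j i ↔ z i = z j := by
  have hle := h.maxSurplus_add_le (z := z) hij
  have hge := h.symm.maxSurplus_add_le (z := z) hij.symm
  constructor <;> intro <;> linarith

lemma eq_of_inKernel [Fintype N] (h : AreSubstitutes v i j) (hz : inKernel v z) : z i = z j := by
  rcases eq_or_ne i j with rfl | hij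
  · rfl
  · exact (h.maxSurplus_eq_iff hij).mp (hz.2 i j hij)

end AreSubstitutes

end TransferableUtility

section Matchings

variable {F W : Type*} {r : F → ℕ} {S : Finset F} {T T' : Finset W} {μ : Finset (F × W)}

lemma IsMatching.card_le_capacity (h : IsMatching r S T μ) : μ.card ≤ ∑ i ∈ S, r i := by
  rw [card_eq_sum_card_fiberwise fun p hp => (h.1 p hp).1]
  exact sum_le_sum fun i _ => h.2.1 i

lemma IsMatching.card_le_workers (h : IsMatching r S T μ) : μ.card ≤ T.card := by
  simpa using card_le_mul_card_image_of_maps_to (fun p hp => (h.1 p hp).2) 1 fun j _ => h.2.2 j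

lemma IsMatching.mono_right (h : IsMatching r S T μ) (hT : T ⊆ T') : IsMatching r S T' μ :=
  ⟨fun p hp => ⟨(h.1 p hp).1, hT (h.1 p hp).2⟩, h.2⟩

lemma exists_isMatching_card_eq (hT : T.card ≤ ∑ i ∈ S, r i) :
    ∃ μ : Finset (F × W), IsMatching r S T μ ∧ μ.card = T.card := by
  -- The seats of the firms in `S`, each tagged by its owner, are handed out injectively.
  obtain ⟨seat, hseat⟩ : ∃ seat : T ↪ Σ _ : F, ℕ,
      Set.range seat ⊆ S.sigma fun i => range (r i) :=
    Function.Embedding.exists_of_card_le_finset (by simpa using hT)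
  have seat_mem (j : T) : (seat j).1 ∈ S ∧ (seat j).2 < r (seat j).1 := by
    simpa using hseat (Set.mem_range_self j)
  let pair (j : T) : F × W := ((seat j).1, j)
  have pair_injective : Function.Injective pair :=
    fun j k h => Subtype.ext (congrArg Prod.snd h)
  refine ⟨univ.image pair, ⟨?_, fun i => ?_, fun j => ?_⟩, ?_⟩
  · simp only [mem_image]
    rintro _ ⟨j, -, rfl⟩
    exact ⟨(seat_mem j).1, j.2⟩
  · rw [filter_image]
    refine card_image_le.trans (card_range (r i) ▸
      card_le_card_of_injOn (fun j => (seat j).2) (fun j hj => ?_) fun j hj k hk hjk => ?_)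
    · simpa [← (mem_filter.mp hj).2] using (seat_mem j).2
    · have hfirm : (seat j).1 = (seat k).1 := (mem_filter.mp hj).2.trans (mem_filter.mp hk).2.symm
      exact seat.injective (Sigma.ext hfirm (heq_of_eq hjk))
  · simp only [card_le_one, mem_filter, mem_image]
    rintro _ ⟨⟨k, -, rfl⟩, hk⟩ _ ⟨⟨l, -, rfl⟩, hl⟩
    exact congrArg pair (Subtype.ext (hk.trans hl.symm))
  · simp [card_image_of_injective _ pair_injective]

end Matchings

section UnitGame

/-- The game of the market with capacities `r` in which every pair has value `1`. -/
abbrev unitGame (r : F → ℕ) : Finset (F ⊕ W) → ℝ := gameValue (fun _ _ => 1) r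

lemma vGamma_one (r : F → ℕ) (S : Finset F) (T : Finset W) :
    vGamma (fun _ _ => 1) r S T = ((min (∑ i ∈ S, r i) T.card : ℕ) : ℝ) := by
  apply le_antisymm
  · refine sup'_le _ _ fun μ hμ => ?_
    have hμ := (mem_filter.mp hμ).2
    calc matchValue (fun _ _ => 1) μ = μ.card := by simp [matchValue]
      _ ≤ ((min (∑ i ∈ S, r i) T.card : ℕ) : ℝ) :=
        mod_cast le_min hμ.card_le_capacity hμ.card_le_workers
  · obtain ⟨T', hT', hcard⟩ := exists_subset_card_eq (min_le_right (∑ i ∈ S, r i) T.card)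
    obtain ⟨μ, hμ, hμ_card⟩ := exists_isMatching_card_eq (hcard.trans_le (min_le_left _ _))
    replace hμ := hμ.mono_right hT'
    have hmem : μ ∈ (S ×ˢ T).powerset.filter fun μ => IsMatching r S T μ :=
      mem_filter.mpr ⟨mem_powerset.mpr fun p hp => mem_product.mpr (hμ.1 p hp), hμ⟩
    calc ((min (∑ i ∈ S, r i) T.card : ℕ) : ℝ)
        = matchValue (fun _ _ => 1) μ := by
          simp only [matchValue, sum_const, nsmul_one, hμ_card, hcard]
      _ ≤ vGamma (fun _ _ => 1) r S T := le_sup' _ hmem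

lemma unitGame_apply (r : F → ℕ) (C : Finset (F ⊕ W)) :
    unitGame r C = ((min (∑ i ∈ C.toLeft, r i) C.toRight.card : ℕ) : ℝ) := by
  have hfirm : firmPart C = C.toLeft := by ext; simp [firmPart]
  have hworker : workerPart C = C.toRight := by ext; simp [workerPart]
  rw [← hfirm, ← hworker]
  exact vGamma_one r _ _

lemma unitGame_nonneg (r : F → ℕ) (C : Finset (F ⊕ W)) : 0 ≤ unitGame r C := by
  rw [unitGame_apply]
  positivity

lemma unitGame_singleton (r : F → ℕ) (k : F ⊕ W) : unitGame r {k} = 0 := by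
  cases k with
  | inl i =>
    have : ({.inl i} : Finset (F ⊕ W)).toRight = ∅ := by ext; simp
    simp [unitGame_apply, this]
  | inr j =>
    have : ({.inr j} : Finset (F ⊕ W)).toLeft = ∅ := by ext; simp
    simp [unitGame_apply, this]

lemma unitGame_le_card (r : F → ℕ) (C : Finset (F ⊕ W)) : unitGame r C ≤ C.toRight.card := by
  rw [unitGame_apply]
  exact_mod_cast min_le_right _ _

lemma unitGame_eq_card {r : F → ℕ} {C : Finset (F ⊕ W)} (h : C.toRight.card ≤ ∑ i ∈ C.toLeft, r i) :
    unitGame r C = C.toRight.card := by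
  rw [unitGame_apply, min_eq_right h]

lemma unitGame_univ {r : F → ℕ} (h : Fintype.card W ≤ ∑ i, r i) :
    unitGame r (univ : Finset (F ⊕ W)) = Fintype.card W := by
  rw [unitGame_eq_card (by simpa)]
  simp

end UnitGame

section Core

variable {r : F → ℕ} {i k : F}

lemma exists_cover_inter_eq_singleton (hik : i ≠ k) (hi : 0 < r i) (hk : 0 < r k)
    (hW : Fintype.card W < ∑ i, r i) (j : W) :
    ∃ C D : Finset (F ⊕ W), C ∪ D = univ ∧ C ∩ D = {Sum.inr j} ∧
      unitGame r C + unitGame r D = Fintype.card W + 1 := by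
  obtain ⟨T, hjT, -, hT⟩ : ∃ T : Finset W, {j} ⊆ T ∧ T ⊆ univ ∧
      T.card = min (r i) (Fintype.card W) :=
    exists_subsuperset_card_eq (subset_univ _)
      (by simpa using ⟨hi, Fintype.card_pos_iff.mpr ⟨j⟩⟩) (min_le_right _ _)
  rw [singleton_subset_iff] at hjT
  have hT' : (insert j Tᶜ).card = Fintype.card W - T.card + 1 := by
    rw [card_insert_of_notMem (by simpa), card_compl]
  have hT_le : T.card ≤ Fintype.card W := card_le_univ T
  have hseats : r i + ∑ l ∈ {i}ᶜ, r l = ∑ l, r l := Fintype.sum_eq_add_sum_compl i r |>.symm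
  have hk_le : r k ≤ ∑ l ∈ {i}ᶜ, r l :=
    single_le_sum (fun _ _ => Nat.zero_le _) (by simpa using hik.symm)
  refine ⟨disjSum {i} T, disjSum {i}ᶜ (insert j Tᶜ), ?_, ?_, ?_⟩
  · ext (l | l) <;> simp [em, or_left_comm]
  · ext (l | l)
    · simp
    · simp only [inr_mem_disjSum, mem_inter, mem_insert, mem_compl, mem_singleton, Sum.inr.injEq]
      grind
  · rw [unitGame_eq_card (by simp; omega), unitGame_eq_card (by simp [hT']; omega)]
    simp only [toRight_disjSum, hT']
    norm_cast
    omega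

theorem inCore_unitGame_iff (hik : i ≠ k) (hi : 0 < r i) (hk : 0 < r k)
    (hW : Fintype.card W < ∑ i, r i) {z : F ⊕ W → ℝ} :
    inCore (unitGame r) z ↔ z = Sum.elim (fun _ => 0) (fun _ => 1) := by
  have huniv := unitGame_univ hW.le
  constructor
  · intro hz
    have firm_nonneg (l : F) : 0 ≤ z (.inl l) := by
      simpa using (unitGame_nonneg r _).trans (hz.2 {.inl l})
    have one_le_worker (j : W) : 1 ≤ z (.inr j) := by
      obtain ⟨C, D, hcover, hinter, hworth⟩ := exists_cover_inter_eq_singleton hik hi hk hW j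
      have := hz.add_sub_le_sum_inter hcover
      rw [hinter, sum_singleton, hworth, huniv] at this
      linarith
    have hle : ∀ p ∈ univ, Sum.elim (fun _ => 0) (fun _ => 1) p ≤ z p := by
      rintro (l | j) -
      exacts [firm_nonneg l, one_le_worker j]
    have htotal : ∑ p, Sum.elim (fun _ : F => (0 : ℝ)) (fun _ : W => 1) p = ∑ p, z p := by
      rw [hz.1, huniv]
      simp
    exact funext fun p => ((sum_eq_sum_iff_of_le hle).mp htotal p (mem_univ p)).symm
  · rintro rfl
    refine ⟨by rw [huniv]; simp, fun C => ?_⟩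
    rw [sum_sum_eq_sum_toLeft_add_sum_toRight]
    simpa using unitGame_le_card r C

end Core

section Kernel

variable {c : ℕ}

/-- The payoff giving `α` to every firm and dividing what is left of the worth `|W|` of the unit
market equally among the workers. -/
def splitPayoff (α : ℝ) : F ⊕ W → ℝ :=
  Sum.elim (fun _ => α) (fun _ => 1 - Fintype.card F * α / Fintype.card W)

/-- Coalitions of all firms but one with exactly as many workers as these can hire at capacity `c`.
They have the largest excess at the payoffs `splitPayoff α`. -/
def IsStaffedAllButOne (c : ℕ) (C : Finset (F ⊕ W)) : Prop :=
  C.toLeft.card + 1 = Fintype.card F ∧ C.toRight.card = c * C.toLeft.card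

lemma unitGame_const_apply (c : ℕ) (C : Finset (F ⊕ W)) :
    unitGame (fun _ => c) C = ((min (c * C.toLeft.card) C.toRight.card : ℕ) : ℝ) := by
  rw [unitGame_apply, sum_const, smul_eq_mul, mul_comm]

lemma areSubstitutes_unitGame_firms (i k : F) :
    AreSubstitutes (unitGame (W := W) fun _ => c) (.inl i) (.inl k) := by
  intro C hi hk
  rw [unitGame_const_apply, unitGame_const_apply]
  simp [hi, hk]

lemma areSubstitutes_unitGame_workers (r : F → ℕ) (j k : W) :
    AreSubstitutes (unitGame r) (.inr j) (.inr k) := by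
  intro C hj hk
  rw [unitGame_apply, unitGame_apply]
  simp [hj, hk]

lemma sum_splitPayoff [Nonempty W] (α : ℝ) :
    ∑ k, splitPayoff (F := F) (W := W) α k = Fintype.card W := by
  simp only [splitPayoff, Fintype.sum_sum_type, Sum.elim_inl, Sum.elim_inr, sum_const, card_univ,
    nsmul_eq_mul]
  field_simp
  ring

lemma excess_splitPayoff (c : ℕ) (α : ℝ) (C : Finset (F ⊕ W)) :
    excess (unitGame fun _ => c) (splitPayoff α) C =
      ((min (c * C.toLeft.card) C.toRight.card : ℕ) : ℝ) - C.toLeft.card * α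
        - C.toRight.card * (1 - Fintype.card F * α / Fintype.card W) := by
  rw [excess, unitGame_const_apply, sum_sum_eq_sum_toLeft_add_sum_toRight]
  simp only [splitPayoff, Sum.elim_inl, Sum.elim_inr, sum_const, nsmul_eq_mul]
  ring

lemma excess_splitPayoff_le [Nonempty F] [Nonempty W] {α : ℝ} (hα : 0 ≤ α)
    (hαW : Fintype.card F * α ≤ Fintype.card W) (hW : Fintype.card W ≤ c * Fintype.card F)
    (C : Finset (F ⊕ W)) :
    excess (unitGame fun _ => c) (splitPayoff α) C ≤
      (Fintype.card F - 1) * (c * (Fintype.card F * α / Fintype.card W) - α) := by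
  rw [excess_splitPayoff]
  set s := C.toLeft.card
  set t := C.toRight.card
  set q := min (c * s) t
  set β : ℝ := Fintype.card F * α / Fintype.card W with hβ
  have hWpos : (0 : ℝ) < Fintype.card W := mod_cast Fintype.card_pos
  have hβ_mul : Fintype.card W * β = Fintype.card F * α := mul_div_cancel₀ _ hWpos.ne'
  have hβ_nonneg : 0 ≤ β := by positivity
  have hβ_le : β ≤ 1 := by rwa [hβ, div_le_one hWpos]
  have hgain : 0 ≤ c * β - α := by
    have hW' : (Fintype.card W : ℝ) ≤ c * Fintype.card F := mod_cast hW
    refine sub_nonneg.mpr (le_of_mul_le_mul_left (a := (Fintype.card F : ℝ)) ?_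
      (mod_cast Fintype.card_pos))
    linarith [mul_le_mul_of_nonneg_right hW' hβ_nonneg]
  have hq_seats : (q : ℝ) ≤ c * s := mod_cast min_le_left (c * s) t
  have hq_workers : (q : ℝ) ≤ t := mod_cast min_le_right (c * s) t
  calc (q : ℝ) - s * α - t * (1 - β) ≤ q * β - s * α := by
        linarith [mul_le_mul_of_nonneg_right hq_workers (sub_nonneg.mpr hβ_le)]
    _ ≤ (Fintype.card F - 1) * (c * β - α) := ?_
  rcases (show s ≤ Fintype.card F from card_le_univ _).eq_or_lt with hs | hs
  · have hqW : (q : ℝ) ≤ Fintype.card W := hq_workers.trans (mod_cast card_le_univ _)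
    have hF : (1 : ℝ) ≤ Fintype.card F := mod_cast Fintype.card_pos
    calc q * β - s * α ≤ Fintype.card W * β - Fintype.card F * α := by rw [hs]; gcongr
      _ = 0 := sub_eq_zero.mpr hβ_mul
      _ ≤ (Fintype.card F - 1) * (c * β - α) := mul_nonneg (sub_nonneg.mpr hF) hgain
  · have hsF : (s : ℝ) ≤ Fintype.card F - 1 := le_sub_iff_add_le.mpr (mod_cast hs)
    calc q * β - s * α ≤ c * s * β - s * α := by gcongr
      _ = s * (c * β - α) := by ring
      _ ≤ (Fintype.card F - 1) * (c * β - α) := mul_le_mul_of_nonneg_right hsF hgain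

lemma IsStaffedAllButOne.excess_eq {C : Finset (F ⊕ W)} (hC : IsStaffedAllButOne c C) (α : ℝ) :
    excess (unitGame fun _ => c) (splitPayoff α) C =
      (Fintype.card F - 1) * (c * (Fintype.card F * α / Fintype.card W) - α) := by
  have hF : (Fintype.card F : ℝ) = C.toLeft.card + 1 := mod_cast hC.1.symm
  rw [excess_splitPayoff, hC.2, min_self, Nat.cast_mul]
  linear_combination (α - c * (Fintype.card F * α / Fintype.card W)) * hF

lemma exists_isStaffedAllButOne_firm (hF : 1 < Fintype.card F)
    (hvac : c * Fintype.card F < Fintype.card W + c) (i : F) (j : W) :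
    ∃ C, IsStaffedAllButOne c C ∧ .inl i ∈ C ∧ .inr j ∉ C := by
  obtain ⟨k, hk⟩ := Fintype.exists_ne_of_one_lt_card hF i
  obtain ⟨T, hT, hT_card⟩ : ∃ T ⊆ ({j}ᶜ : Finset W), T.card = c * ({k}ᶜ : Finset F).card := by
    apply exists_subset_card_eq
    simp only [card_compl, card_singleton, Nat.mul_sub_one]
    omega
  refine ⟨disjSum {k}ᶜ T, ⟨?_, by simp [hT_card]⟩, by simpa using hk.symm, ?_⟩
  · simp only [toLeft_disjSum, card_compl, card_singleton]
    omega
  · simpa using fun hj => by simpa using hT hj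

lemma exists_isStaffedAllButOne_worker (hF : 1 < Fintype.card F) (hc : 0 < c)
    (hvac : c * Fintype.card F < Fintype.card W + c) (i : F) (j : W) :
    ∃ C, IsStaffedAllButOne c C ∧ .inr j ∈ C ∧ .inl i ∉ C := by
  obtain ⟨T, hjT, -, hT_card⟩ : ∃ T : Finset W, {j} ⊆ T ∧ T ⊆ univ ∧
      T.card = c * ({i}ᶜ : Finset F).card := by
    apply exists_subsuperset_card_eq (subset_univ _)
    · simp only [card_compl, card_singleton]
      exact Nat.mul_pos hc (Nat.sub_pos_of_lt hF)
    · simp only [card_compl, card_singleton, card_univ, Nat.mul_sub_one]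
      omega
  refine ⟨disjSum {i}ᶜ T, ⟨?_, by simp [hT_card]⟩, by simpa using hjT, by simp⟩
  simp only [toLeft_disjSum, card_compl, card_singleton]
  omega

lemma maxSurplus_splitPayoff_firm_worker {α : ℝ} (i : F) (j : W) (hF : 1 < Fintype.card F)
    (hvac : c * Fintype.card F < Fintype.card W + c) (hW : Fintype.card W ≤ c * Fintype.card F)
    (hα : 0 ≤ α) (hαW : Fintype.card F * α ≤ Fintype.card W) :
    maxSurplus (unitGame fun _ => c) (splitPayoff α) (.inl i) (.inr j) =
      maxSurplus (unitGame fun _ => c) (splitPayoff α) (.inr j) (.inl i) := by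
  have : Nonempty F := ⟨i⟩
  have : Nonempty W := ⟨j⟩
  have hc : 0 < c := Nat.pos_of_mul_pos_right (Fintype.card_pos.trans_le hW)
  have excess_le {C : Finset (F ⊕ W)} (hC : IsStaffedAllButOne c C) (D : Finset (F ⊕ W)) :
      excess (unitGame fun _ => c) (splitPayoff α) D ≤
        excess (unitGame fun _ => c) (splitPayoff α) C :=
    hC.excess_eq α ▸ excess_splitPayoff_le hα hαW hW D
  obtain ⟨C, hC, hiC, hjC⟩ := exists_isStaffedAllButOne_firm hF hvac i j
  obtain ⟨D, hD, hjD, hiD⟩ := exists_isStaffedAllButOne_worker hF hc hvac i j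
  rw [maxSurplus_eq_excess hiC hjC fun S _ _ => excess_le hC S,
    maxSurplus_eq_excess hjD hiD fun S _ _ => excess_le hD S, hC.excess_eq, hD.excess_eq]

lemma inKernel_splitPayoff [Nonempty W] {α : ℝ} (hF : 1 < Fintype.card F)
    (hvac : c * Fintype.card F < Fintype.card W + c) (hW : Fintype.card W ≤ c * Fintype.card F)
    (hα : 0 ≤ α) (hαW : Fintype.card F * α ≤ Fintype.card W) :
    inKernel (unitGame (F := F) (W := W) fun _ => c) (splitPayoff α) := by
  refine ⟨⟨?_, ?_⟩, ?_⟩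
  · rw [sum_splitPayoff, unitGame_univ (by simpa [mul_comm] using hW)]
  · rintro (i | j) <;> rw [unitGame_singleton]
    · exact hα
    · exact sub_nonneg.mpr (div_le_one_of_le₀ hαW (Nat.cast_nonneg _))
  · rintro (i | j) (k | l) hne
    · exact ((areSubstitutes_unitGame_firms i k).maxSurplus_eq_iff hne).mpr rfl
    · exact maxSurplus_splitPayoff_firm_worker i l hF hvac hW hα hαW
    · exact (maxSurplus_splitPayoff_firm_worker k j hF hvac hW hα hαW).symm
    · exact ((areSubstitutes_unitGame_workers _ j l).maxSurplus_eq_iff hne).mpr rfl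

lemma exists_eq_splitPayoff_of_inKernel [Nonempty F] [Nonempty W]
    (hW : Fintype.card W ≤ c * Fintype.card F) {z : F ⊕ W → ℝ}
    (hz : inKernel (unitGame fun _ => c) z) :
    ∃ α : ℝ, 0 ≤ α ∧ Fintype.card F * α ≤ Fintype.card W ∧ z = splitPayoff α := by
  obtain ⟨i₀⟩ := ‹Nonempty F›
  obtain ⟨j₀⟩ := ‹Nonempty W›
  have hfirm (i : F) : z (.inl i) = z (.inl i₀) :=
    (areSubstitutes_unitGame_firms i i₀).eq_of_inKernel hz
  have hworker (j : W) : z (.inr j) = z (.inr j₀) :=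
    (areSubstitutes_unitGame_workers _ j j₀).eq_of_inKernel hz
  have nonneg (k : F ⊕ W) : 0 ≤ z k := by
    simpa only [unitGame_singleton] using hz.1.2 k
  have budget : Fintype.card F * z (.inl i₀) + Fintype.card W * z (.inr j₀) = Fintype.card W := by
    simpa [hfirm, hworker, unitGame_univ (r := fun _ : F => c) (by simpa [mul_comm] using hW)]
      using hz.1.1
  have hWpos : (0 : ℝ) < Fintype.card W := mod_cast Fintype.card_pos_iff.mpr ⟨j₀⟩
  refine ⟨z (.inl i₀), nonneg _, ?_, funext ?_⟩
  · linarith [mul_nonneg hWpos.le (nonneg (.inr j₀))]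
  · rintro (i | j)
    · exact hfirm i
    · rw [hworker, splitPayoff, Sum.elim_inr]
      field_simp
      linarith

theorem inKernel_unitGame_iff (hF : 1 < Fintype.card F)
    (hvac : c * Fintype.card F < Fintype.card W + c) (hW : Fintype.card W ≤ c * Fintype.card F)
    {z : F ⊕ W → ℝ} :
    inKernel (unitGame fun _ => c) z ↔
      ∃ α : ℝ, 0 ≤ α ∧ α ≤ Fintype.card W / Fintype.card F ∧ z = splitPayoff α := by
  have : Nonempty F := Fintype.card_pos_iff.mp (by omega)
  have : Nonempty W := Fintype.card_pos_iff.mp (by nlinarith)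
  have hFpos : (0 : ℝ) < Fintype.card F := mod_cast Fintype.card_pos
  simp only [le_div_iff₀' hFpos]
  exact ⟨exists_eq_splitPayoff_of_inKernel hW,
    fun ⟨α, hα, hαW, hz⟩ => hz ▸ inKernel_splitPayoff hF hvac hW hα hαW⟩

end Kernel

theorem example_kernel_not_in_core_general {c : ℕ} (hF : 1 < Fintype.card F)
    (hvac : c * Fintype.card F < Fintype.card W + c) (hW : Fintype.card W < c * Fintype.card F) :
    (∀ z : F ⊕ W → ℝ, inCore (unitGame fun _ => c) z ↔ z = Sum.elim (fun _ => 0) (fun _ => 1)) ∧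
    (∀ z : F ⊕ W → ℝ, inKernel (unitGame fun _ => c) z ↔
      ∃ α : ℝ, 0 ≤ α ∧ α ≤ Fintype.card W / Fintype.card F ∧
        z = Sum.elim (fun _ => α) (fun _ => 1 - Fintype.card F * α / Fintype.card W)) ∧
    ¬ ∀ z : F ⊕ W → ℝ, inKernel (unitGame fun _ => c) z → inCore (unitGame fun _ => c) z := by
  obtain ⟨i, k, hik⟩ := Fintype.one_lt_card_iff.mp hF
  have hc : 0 < c := Nat.pos_of_mul_pos_right (Nat.zero_lt_of_lt hW)
  have core_iff {z : F ⊕ W → ℝ} :=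
    inCore_unitGame_iff (r := fun _ => c) (z := z) hik hc hc (by simpa [mul_comm] using hW)
  have kernel_iff {z : F ⊕ W → ℝ} := inKernel_unitGame_iff (z := z) hF hvac hW.le
  refine ⟨fun _ => core_iff, fun _ => kernel_iff, fun hsub => ?_⟩
  have hα : (0 : ℝ) < Fintype.card W / Fintype.card F :=
    div_pos (by norm_cast; nlinarith) (by norm_cast; omega)
  have hcore := core_iff.mp (hsub _ (kernel_iff.mpr ⟨_, hα.le, le_rfl, rfl⟩))
  exact hα.ne' (congrFun hcore (.inl i))

/-- in the market with two firms of capacity 2, three workers and all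
valuations equal to 1, the core is the single point `(0,0;1,1,1)`, the kernel is the
segment `{(α,α;1-2α/3,1-2α/3,1-2α/3) : 0 ≤ α ≤ 3/2}`, and hence the kernel is not
included in the core. -/
theorem example_kernel_not_in_core :
    (∀ z : Fin 2 ⊕ Fin 3 → ℝ,
        inCore (gameValue (fun (_ : Fin 2) (_ : Fin 3) => (1 : ℝ)) (fun _ => 2)) z ↔
          z = Sum.elim (fun _ => (0 : ℝ)) (fun _ => (1 : ℝ))) ∧
    (∀ z : Fin 2 ⊕ Fin 3 → ℝ,
        inKernel (gameValue (fun (_ : Fin 2) (_ : Fin 3) => (1 : ℝ)) (fun _ => 2)) z ↔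
          ∃ α : ℝ, 0 ≤ α ∧ α ≤ 3 / 2 ∧
            z = Sum.elim (fun _ => α) (fun _ => 1 - 2 * α / 3)) ∧
    ¬ (∀ z : Fin 2 ⊕ Fin 3 → ℝ,
        inKernel (gameValue (fun (_ : Fin 2) (_ : Fin 3) => (1 : ℝ)) (fun _ => 2)) z →
          inCore (gameValue (fun (_ : Fin 2) (_ : Fin 3) => (1 : ℝ)) (fun _ => 2)) z) := by
  simpa using example_kernel_not_in_core_general (F := Fin 2) (W := Fin 3) (c := 2)
    (by simp) (by simp) (by simp)

end
end
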